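/- Let F = ℚ(√−3). There is no field extension E of F with [E : F] = 3 such that E/F is Galois and every prime ideal of the ring of integers of F not dividing 2 is unramified in E. -/

import Mathlib

/-!
The argument is Kummer theory made explicit. Let `ζ` be a primitive cube root of unity in `F` and
`λ = ζ - 1`, the prime above `3`. The extension `E/F` is cyclic of degree `3`, so it is generated by
a cube root `α` of some `a ∈ F` that is not a cube in `F`; after scaling, `α` and `a` are integral.
A contradiction comes from `exists_cube_of_cube`: an element `a` of `𝓞 F` that becomes a cube in
`𝓞 E` is already a cube in `𝓞 F`.

That lemma is proved by induction on the factorization of `a` in the principal ideal domain `𝓞 F`.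
If a prime `π ∤ 2` divides `a = α ^ 3`, then `π ∣ α` because `π 𝓞 E` is squarefree, so `π ^ 3`
divides `a` and may be removed; a factor `2 ^ 3` may be removed as well. As `2` is prime in `𝓞 F`
and the units are `± ζ ^ j`, what is left is, up to sign, `b = ζ ^ j * (-2) ^ i` with `i, j < 3`.
Here `b ≡ 1` modulo `λ`, and squarefreeness of `λ 𝓞 E` forces `λ ^ 3 ∣ b - 1`
(`lambda_cube_dvd_of_cube`), which only happens for `i = j = 0`
(`exponents_eq_zero_of_lambda_cube_dvd`).
-/

open NumberField

/-- The quotient `y / x` is integral over `A` and lies in the fraction field of `A`. -/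
lemma dvd_of_algebraMap_dvd {A B : Type*} [CommRing A] [IsDomain A] [IsIntegrallyClosed A]
    [CommRing B] [IsDomain B] [Algebra A B] [Algebra.IsIntegral A B] [FaithfulSMul A B] {x y : A}
    (h : algebraMap A B x ∣ algebraMap A B y) : x ∣ y := by
  have inj : Function.Injective (algebraMap A B) := FaithfulSMul.algebraMap_injective A B
  by_cases hx : x = 0
  · subst hx
    rw [map_zero, zero_dvd_iff, map_eq_zero_iff _ inj] at h
    simp [h]
  obtain ⟨c, hc⟩ := h
  let K := FractionRing A
  let L := FractionRing B
  have hxK : algebraMap A K x ≠ 0 := by simpa using hx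
  let q : K := algebraMap A K y / algebraMap A K x
  have injL : Function.Injective (algebraMap A L) := FaithfulSMul.algebraMap_injective A L
  let f : K →ₐ[A] L := IsFractionRing.liftAlgHom (g := Algebra.ofId A L) injL
  have hq : f q = algebraMap B L c := by
    have hxL : algebraMap A L x ≠ 0 := by simpa using hx
    simp only [q, map_div₀, AlgHom.commutes]
    rw [div_eq_iff hxL, IsScalarTower.algebraMap_apply A B L, IsScalarTower.algebraMap_apply A B L,
      hc, map_mul, mul_comm]
  have hint : IsIntegral A q := by
    rw [← isIntegral_algHom_iff f f.toRingHom.injective, hq]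
    exact (Algebra.IsIntegral.isIntegral (R := A) c).map (IsScalarTower.toAlgHom A B L)
  obtain ⟨d, hd⟩ := IsIntegrallyClosed.isIntegral_iff.mp hint
  refine ⟨d, IsFractionRing.injective A K ?_⟩
  rw [map_mul, hd, mul_div_cancel₀ _ hxK]

/-- If `p` is unramified in `B`, then `p B` is a radical ideal. -/
lemma dvd_of_dvd_pow_of_squarefree_map {A B : Type*} [CommRing A] [CommRing B]
    [IsDedekindDomain B] [Algebra A B] {p : A} {β : B} {n : ℕ}
    (hsq : Squarefree (Ideal.map (algebraMap A B) (Ideal.span {p})))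
    (h : algebraMap A B p ∣ β ^ n) : algebraMap A B p ∣ β := by
  rw [Ideal.map_span, Set.image_singleton] at hsq
  have := hsq.isRadical n (Ideal.span {β})
  rw [Ideal.span_singleton_pow, Ideal.dvd_span_singleton, Ideal.dvd_span_singleton,
    Ideal.mem_span_singleton, Ideal.mem_span_singleton] at this
  exact this h

lemma exists_isPrimitiveRoot_three {F : Type*} [Field F] [CharZero F]
    (hF : ∃ α : F, α ^ 2 = -3) : ∃ ζ : F, IsPrimitiveRoot ζ 3 := by
  obtain ⟨α, hα⟩ := hF
  refine ⟨(-1 + α) / 2,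
    IsPrimitiveRoot.of_map_of_injective (f := RingHom.id F) ?_ Function.injective_id⟩
  rw [← Polynomial.isRoot_cyclotomic_iff, Polynomial.IsRoot, Polynomial.cyclotomic_three]
  simp
  linear_combination hα / 4

lemma isCyclotomicExtension_three_of_finrank {K F : Type*} [Field K] [Field F] [Algebra K F]
    [FiniteDimensional K F] (hirr : Irreducible (Polynomial.cyclotomic 3 K))
    (hdeg : Module.finrank K F = 2) {ζ : F} (hζ : IsPrimitiveRoot ζ 3) :
    IsCyclotomicExtension {3} K F := by
  have hc := hζ.intermediateField_adjoin_isCyclotomicExtension K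
  have hfin : Module.finrank K (IntermediateField.adjoin K {ζ}) = 2 := by
    rw [IsCyclotomicExtension.finrank (n := 3) _ hirr]
    decide
  have htop : IntermediateField.adjoin K {ζ} = ⊤ :=
    IntermediateField.eq_of_le_of_finrank_eq le_top (by simp [hfin, hdeg])
  rw [htop] at hc
  exact IsCyclotomicExtension.equiv _ _ _ IntermediateField.topEquiv

lemma toInteger_sq {F : Type*} [Field F] {ζ : F} (hζ : IsPrimitiveRoot ζ 3) :
    hζ.toInteger ^ 2 = -hζ.toInteger - 1 :=
  IsCyclotomicExtension.Rat.Three.eta_sq hζ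

section
variable {F : Type*} [Field F] [NumberField F] [IsCyclotomicExtension {3} ℚ F]
  {ζ : F}

lemma exists_int_coords (hζ : IsPrimitiveRoot ζ 3) (x : 𝓞 F) :
    ∃ c d : ℤ, x = c + d * hζ.toInteger := by
  have hz := toInteger_sq hζ
  have hx : x ∈ Algebra.adjoin ℤ {hζ.toInteger} := by
    rw [IsCyclotomicExtension.Rat.adjoin_singleton_eq_top]; trivial
  induction hx using Algebra.adjoin_induction with
  | mem x hx => exact ⟨0, 1, by simp_all⟩
  | algebraMap r => exact ⟨r, 0, by simp⟩
  | add x y _ _ hx hy =>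
    obtain ⟨a, b, rfl⟩ := hx
    obtain ⟨c, d, rfl⟩ := hy
    exact ⟨a + c, b + d, by push_cast; ring⟩
  | mul x y _ _ hx hy =>
    obtain ⟨a, b, rfl⟩ := hx
    obtain ⟨c, d, rfl⟩ := hy
    exact ⟨a * c - b * d, a * d + b * c - b * d, by
      push_cast; linear_combination (b * d : 𝓞 F) * hz⟩

lemma two_prime (hζ : IsPrimitiveRoot ζ 3) : Prime (2 : 𝓞 F) := by
  have hz := toInteger_sq hζ
  have hz3 := hζ.toInteger_cube_eq_one
  refine ⟨two_ne_zero, fun h => ?_, fun x y hxy => ?_⟩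
  · have : (2 : ℤ) ∣ 1 := dvd_of_algebraMap_dvd (B := 𝓞 F) (by simpa using h.dvd)
    omega
  -- A class modulo `2` is `0`, `1`, `ζ` or `1 + ζ = -ζ ^ 2`, and the last three are units.
  have key : 2 ∣ x ∨ ∃ w t, w * x = 1 + 2 * t := by
    obtain ⟨c, d, rfl⟩ := exists_int_coords hζ x
    rcases Int.even_or_odd' c with ⟨m, rfl | rfl⟩ <;> rcases Int.even_or_odd' d with ⟨n, rfl | rfl⟩
    · exact .inl ⟨m + n * hζ.toInteger, by push_cast; ring⟩
    · exact .inr ⟨hζ.toInteger ^ 2, hζ.toInteger ^ 2 * (m + n * hζ.toInteger), by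
        push_cast; linear_combination hz3⟩
    · exact .inr ⟨1, m + n * hζ.toInteger, by push_cast; ring⟩
    · exact .inr ⟨-hζ.toInteger, -hζ.toInteger * (m + n * hζ.toInteger), by
        push_cast; linear_combination -hz⟩
  refine key.imp_right ?_
  rintro ⟨w, t, hw⟩
  obtain ⟨s, hs⟩ := hxy
  exact ⟨w * s - t * y, by linear_combination w * hs - y * hw⟩

/-- If `s ^ 2 = 1` then `s + λ t` is prime to `λ`, so `λ ^ k * (s + λ t)` has `λ`-adic valuation
exactly `k`. -/
lemma not_lambda_cube_dvd (hζ : IsPrimitiveRoot ζ 3) {k : ℕ} (hk : k < 3)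
    {s t : 𝓞 F} (hs : s ^ 2 = 1) :
    ¬ (hζ.toInteger - 1) ^ 3 ∣ (hζ.toInteger - 1) ^ k * (s + (hζ.toInteger - 1) * t) := by
  have hp : Prime (hζ.toInteger - 1) := hζ.zeta_sub_one_prime'
  generalize hζ.toInteger - 1 = l at *
  intro h
  obtain ⟨m, hm⟩ : ∃ m, 3 = k + (m + 1) := ⟨2 - k, by omega⟩
  rw [hm, pow_add, mul_dvd_mul_iff_left (pow_ne_zero _ hp.ne_zero)] at h
  have h1 := (dvd_pow_self _ (Nat.succ_ne_zero m)).trans h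
  rw [dvd_add_left (dvd_mul_right _ _)] at h1
  exact hp.not_isUnit (isUnit_of_dvd_one (hs ▸ h1.trans (dvd_pow_self s two_ne_zero)))

/-- The elements `ζ ^ j * (-2) ^ i` with `i, j < 3` and `(i, j) ≠ (0, 0)` are not congruent to `1`
modulo `λ ^ 3`: their difference from `1` has valuation `1` if `j ≠ 0` and `2` if `j = 0`. -/
lemma exponents_eq_zero_of_lambda_cube_dvd (hζ : IsPrimitiveRoot ζ 3) {i j : ℕ}
    (hi : i < 3) (hj : j < 3)
    (h : (hζ.toInteger - 1) ^ 3 ∣ hζ.toInteger ^ j * (-2) ^ i - 1) : i = 0 ∧ j = 0 := by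
  have hz := toInteger_sq hζ
  -- Exhibiting the difference as `λ ^ k * (± 1 + λ t)` with `k ≤ 2` rules out a case.
  have aux (k : ℕ) (hk : k < 3) (s t : 𝓞 F) (hs : s ^ 2 = 1)
      (e : hζ.toInteger ^ j * (-2) ^ i - 1 =
        (hζ.toInteger - 1) ^ k * (s + (hζ.toInteger - 1) * t)) : i = 0 ∧ j = 0 :=
    (not_lambda_cube_dvd hζ hk hs (e ▸ h)).elim
  generalize hζ.toInteger = z at *
  interval_cases j <;> interval_cases i
  · simp
  · exact aux 2 (by simp) 1 (z + 1) (by simp) (by grind)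
  · exact aux 2 (by simp) (-1) (-(z + 1)) (by simp) (by grind)
  · exact aux 1 (by simp) 1 0 (by simp) (by grind)
  · exact aux 1 (by simp) 1 1 (by simp) (by grind)
  · exact aux 1 (by simp) 1 (-1) (by simp) (by grind)
  · exact aux 1 (by simp) (-1) (z ^ 2) (by simp) (by grind)
  · exact aux 1 (by simp) (-1) (-1) (by simp) (by grind)
  · exact aux 1 (by simp) (-1) (z ^ 2 - z) (by simp) (by grind)

lemma unit_eq_sign_mul_pow (hζ : IsPrimitiveRoot ζ 3) (u : (𝓞 F)ˣ) :
    ∃ s : 𝓞 F, (s = 1 ∨ s = -1) ∧ ∃ j < 3, (u : 𝓞 F) = s * hζ.toInteger ^ j := by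
  have := IsCyclotomicExtension.Rat.Three.Units.mem hζ u
  simp only [List.mem_cons, List.not_mem_nil, or_false] at this
  rcases this with rfl | rfl | rfl | rfl | rfl | rfl
  · exact ⟨1, by simp, 0, by simp, by simp⟩
  · exact ⟨-1, by simp, 0, by simp, by simp⟩
  · exact ⟨1, by simp, 1, by simp, by simp⟩
  · exact ⟨-1, by simp, 1, by simp, by simp⟩
  · exact ⟨1, by simp, 2, by simp, by simp⟩
  · exact ⟨-1, by simp, 2, by simp, by simp⟩

/-- Ramification at `3`. As `3` is divisible by `λ ^ 2`, the congruence `b ≡ 1` modulo `λ` gives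
`(β - 1) ^ 3 ≡ 0` modulo `λ`, hence `β = 1 + λ γ` since `λ 𝓞 E` is squarefree. Expanding `β ^ 3`
shows `λ ^ 3 ∣ b - 1` in `𝓞 E`, hence in `𝓞 F`. -/
lemma lambda_cube_dvd_of_cube {F E : Type*} [Field F] [NumberField F] [Field E] [NumberField E]
    [Algebra F E] {ζ : F} (hζ : IsPrimitiveRoot ζ 3)
    (hsq : Squarefree (Ideal.map (algebraMap (𝓞 F) (𝓞 E)) (Ideal.span {hζ.toInteger - 1})))
    {b : 𝓞 F} {β : 𝓞 E} (hβ : β ^ 3 = algebraMap (𝓞 F) (𝓞 E) b)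
    (hb : hζ.toInteger - 1 ∣ b - 1) : (hζ.toInteger - 1) ^ 3 ∣ b - 1 := by
  have hz := toInteger_sq hζ
  have h3 : (3 : 𝓞 F) = (hζ.toInteger - 1) ^ 2 * (hζ.toInteger + 1) := by
    generalize hζ.toInteger = z at *
    grind
  generalize hζ.toInteger = z at *
  apply dvd_of_algebraMap_dvd (B := 𝓞 E)
  have hthree := congrArg (algebraMap (𝓞 F) (𝓞 E)) h3
  obtain ⟨c, hc⟩ := hb
  have hcMap := congrArg (algebraMap (𝓞 F) (𝓞 E)) hc
  have hd : algebraMap (𝓞 F) (𝓞 E) (z - 1) ∣ β - 1 := by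
    apply dvd_of_dvd_pow_of_squarefree_map hsq (n := 3)
    simp only [map_mul, map_sub, map_one, map_ofNat, map_pow, map_add] at hthree hcMap ⊢
    generalize algebraMap (𝓞 F) (𝓞 E) z = Z at *
    refine ⟨algebraMap (𝓞 F) (𝓞 E) c - (Z - 1) * (Z + 1) * (β ^ 2 - β), ?_⟩
    linear_combination hβ + hcMap - (β ^ 2 - β) * hthree
  obtain ⟨γ, hγ⟩ := hd
  simp only [map_mul, map_sub, map_one, map_ofNat, map_pow, map_add] at hthree hcMap hγ ⊢
  generalize algebraMap (𝓞 F) (𝓞 E) z = Z at *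
  obtain rfl : β = 1 + (Z - 1) * γ := by linear_combination hγ
  refine ⟨γ ^ 3 + (Z - 1) * (Z + 1) * γ ^ 2 + (Z + 1) * γ, ?_⟩
  linear_combination -hβ + ((Z - 1) * γ + (Z - 1) ^ 2 * γ ^ 2) * hthree

/-- An element of `𝓞 F` that becomes a cube in `𝓞 E` is a cube in `𝓞 F`, provided `E/F` is unramified
at all primes not dividing `2`. -/
lemma exists_cube_of_cube {E : Type*} [Field E] [NumberField E] [Algebra F E]
    (hζ : IsPrimitiveRoot ζ 3)
    (hram : ∀ 𝔭 : Ideal (𝓞 F), 𝔭.IsPrime → 𝔭 ≠ ⊥ → (2 : 𝓞 F) ∉ 𝔭 →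
      Squarefree (Ideal.map (algebraMap (𝓞 F) (𝓞 E)) 𝔭)) (a : 𝓞 F) :
    ∀ α : 𝓞 E, α ^ 3 = algebraMap (𝓞 F) (𝓞 E) a → ∃ x : 𝓞 F, x ^ 3 = a := by
  have := IsCyclotomicExtension.Rat.three_pid F
  have hp2 := two_prime hζ
  have hpl : Prime (hζ.toInteger - 1) := hζ.zeta_sub_one_prime'
  have inj : Function.Injective (algebraMap (𝓞 F) (𝓞 E)) := FaithfulSMul.algebraMap_injective _ _
  have hsq (π : 𝓞 F) (hπ : Prime π) (h2 : ¬ π ∣ 2) :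
      Squarefree (Ideal.map (algebraMap (𝓞 F) (𝓞 E)) (Ideal.span {π})) :=
    hram _ ((Ideal.span_singleton_prime hπ.ne_zero).mpr hπ) (by simpa using hπ.ne_zero)
      (by rwa [Ideal.mem_span_singleton])
  have hl3 : hζ.toInteger - 1 ∣ 3 := by simpa using hζ.toInteger_sub_one_dvd_prime'
  induction a using (wellFounded_dvdNotUnit (α := 𝓞 F)).induction with | _ a ih
  intro α hα
  by_cases ha : a = 0
  · exact ⟨0, by simp [ha]⟩
  -- If `π ∣ α` then `a / π ^ 3` is the cube of `α / π`, and the induction hypothesis applies to it.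
  have descend (π : 𝓞 F) (hπ : Prime π) (h : algebraMap (𝓞 F) (𝓞 E) π ∣ α) :
      ∃ x : 𝓞 F, x ^ 3 = a := by
    obtain ⟨β, rfl⟩ := h
    obtain ⟨c, rfl⟩ : π ^ 3 ∣ a := dvd_of_algebraMap_dvd (B := 𝓞 E) ⟨β ^ 3, by
      rw [← hα, map_pow]; ring⟩
    have hc : c ≠ 0 := right_ne_zero_of_mul ha
    obtain ⟨x, hx⟩ := ih c ⟨hc, π ^ 3, fun h => hπ.not_isUnit ((isUnit_pow_iff three_ne_zero).mp h),
      mul_comm _ _⟩ β (by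
        have h0 : algebraMap (𝓞 F) (𝓞 E) π ^ 3 ≠ 0 :=
          pow_ne_zero _ ((map_ne_zero_iff _ inj).mpr hπ.ne_zero)
        apply mul_left_cancel₀ h0
        rw [← mul_pow, hα, map_mul, map_pow])
    exact ⟨π * x, by rw [mul_pow, hx]⟩
  by_cases h1 : ∃ π : 𝓞 F, Prime π ∧ π ∣ a ∧ ¬ π ∣ 2
  · obtain ⟨π, hπ, hπa, hπ2⟩ := h1
    refine descend π hπ (dvd_of_dvd_pow_of_squarefree_map (n := 3) (hsq π hπ hπ2) ?_)
    rw [hα]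
    exact map_dvd _ hπa
  push Not at h1
  by_cases h8 : (2 : 𝓞 F) ^ 3 ∣ a
  · refine descend 2 hp2 ?_
    have := map_dvd (algebraMap (𝓞 F) (𝓞 E)) h8
    rw [← hα, map_pow] at this
    exact (IsIntegrallyClosed.pow_dvd_pow_iff three_ne_zero).mp this
  -- Now `2` is the only prime factor of `a`, with exponent at most `2`.
  obtain ⟨c, hac, hc⟩ :=
    (FiniteMultiplicity.of_not_isUnit hp2.not_isUnit ha).exists_eq_pow_mul_and_not_dvd
  generalize multiplicity 2 a = i at hac
  subst hac
  have hi : i < 3 := by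
    by_contra! hi
    exact h8 ((pow_dvd_pow 2 hi).trans (dvd_mul_right _ _))
  have hcu : IsUnit c := by
    by_contra hcu
    obtain ⟨π, hπ, hπc⟩ := WfDvdMonoid.exists_irreducible_factor hcu (right_ne_zero_of_mul ha)
    have h2 := h1 π hπ.prime (hπc.trans (dvd_mul_left _ _))
    exact hc (((hπ.prime.associated_of_dvd hp2 h2).dvd').trans hπc)
  obtain ⟨u, rfl⟩ := hcu
  obtain ⟨s, hs, j, hj, hu⟩ := unit_eq_sign_mul_pow hζ u
  rw [hu] at hα ⊢
  have hs2 : s ^ 2 = 1 := by rcases hs with rfl | rfl <;> simp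
  have hi2 : ((-1 : 𝓞 F) ^ i) ^ 2 = 1 := by rw [← pow_mul, mul_comm, pow_mul]; simp
  -- The sign `s * (-1) ^ i` is its own cube, so it turns `α` into a cube root of `ζ ^ j * (-2) ^ i`.
  have hb : s * (-1) ^ i * (2 ^ i * (s * hζ.toInteger ^ j)) = hζ.toInteger ^ j * (-2) ^ i := by
    rw [neg_pow 2 i]
    linear_combination ((-1) ^ i * 2 ^ i * hζ.toInteger ^ j) * hs2
  have hβ : (algebraMap (𝓞 F) (𝓞 E) (s * (-1) ^ i) * α) ^ 3 =
      algebraMap (𝓞 F) (𝓞 E) (hζ.toInteger ^ j * (-2) ^ i) := by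
    rw [mul_pow, hα, ← map_pow, ← map_mul, ← hb]
    congr 1
    have : (s * (-1) ^ i) ^ 2 = 1 := by rw [mul_pow, hs2, hi2, one_mul]
    linear_combination (s * (-1) ^ i * (2 ^ i * (s * hζ.toInteger ^ j))) * this
  have hl2 : ¬ hζ.toInteger - 1 ∣ 2 := fun h => by
    have h1 := dvd_sub hl3 h
    rw [show (3 : 𝓞 F) - 2 = 1 by norm_num] at h1
    exact hpl.not_isUnit (isUnit_of_dvd_one h1)
  have hl : hζ.toInteger - 1 ∣ hζ.toInteger ^ j * (-2) ^ i - 1 := by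
    have e1 : hζ.toInteger - 1 ∣ hζ.toInteger ^ j - 1 := sub_one_dvd_pow_sub_one _ _
    have e2 : hζ.toInteger - 1 ∣ (-2) ^ i - 1 := by
      refine (hl3.trans ?_).trans (sub_one_dvd_pow_sub_one (-2 : 𝓞 F) i)
      exact ⟨-1, by norm_num⟩
    have := dvd_add (e1.mul_right ((-2) ^ i)) e2
    rwa [sub_mul, one_mul, sub_add_sub_cancel] at this
  obtain ⟨rfl, rfl⟩ :=
    exponents_eq_zero_of_lambda_cube_dvd hζ hi hj (lambda_cube_dvd_of_cube hζ (hsq _ hpl hl2) hβ hl)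
  exact ⟨s, by simp only [pow_zero, one_mul, mul_one]; linear_combination s * hs2⟩
end

/-- The field `F = ℚ(√−3)` has no Galois extension `E` of degree 3 that is unramified
at every prime ideal of `𝓞 F` not dividing 2. -/
theorem no_cubic_extension_of_Q_sqrt_neg_three_unramified_outside_two
    (F E : Type) [Field F] [NumberField F] [Field E] [NumberField E]
    [Algebra F E]
    (hF : ∃ α : F, α ^ 2 = -3) (hFdeg : Module.finrank ℚ F = 2)
    (hEdeg : Module.finrank F E = 3) (hgal : IsGalois F E)
    (hram : ∀ 𝔭 : Ideal (𝓞 F), 𝔭.IsPrime → 𝔭 ≠ ⊥ → (2 : 𝓞 F) ∉ 𝔭 →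
      Squarefree (Ideal.map (algebraMap (𝓞 F) (𝓞 E)) 𝔭)) :
    False := by
  obtain ⟨ζ, hζ⟩ := exists_isPrimitiveRoot_three hF
  have := isCyclotomicExtension_three_of_finrank
    (Polynomial.cyclotomic.irreducible_rat (by norm_num)) hFdeg hζ
  have : FiniteDimensional F E := Module.finite_of_finrank_pos (by omega)
  have : Fact (Nat.Prime 3) := ⟨Nat.prime_three⟩
  have : IsCyclic Gal(E/F) :=
    isCyclic_of_prime_card (p := 3) (by rw [IsGalois.card_aut_eq_finrank, hEdeg])
  have hroots : (primitiveRoots (Module.finrank F E) F).Nonempty :=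
    ⟨ζ, by rw [hEdeg]; exact (mem_primitiveRoots (by norm_num)).mpr hζ⟩
  obtain ⟨α, ⟨a, ha⟩, hα⟩ := exists_root_adjoin_eq_top_of_isCyclic F E hroots
  have hirr := irreducible_X_pow_sub_C_of_root_adjoin_eq_top ha.symm hα
  rw [hEdeg] at hirr ha
  -- Clear denominators: some nonzero integer multiple `n * α` is an algebraic integer.
  obtain ⟨n, hn, hint⟩ := IsAlgebraic.exists_integral_multiple
    ((IsFractionRing.isAlgebraic_iff ℤ ℚ E).mpr (Algebra.IsAlgebraic.isAlgebraic (R := ℚ) α))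
  rw [zsmul_eq_mul] at hint
  have hinta : IsIntegral ℤ ((n : F) ^ 3 * a) := by
    rw [← isIntegral_algebraMap_iff (FaithfulSMul.algebraMap_injective F E)]
    simpa [ha, mul_pow] using hint.pow 3
  obtain ⟨x, hx⟩ := exists_cube_of_cube hζ hram ⟨(n : F) ^ 3 * a, hinta⟩ ⟨n * α, hint⟩ (by
    apply RingOfIntegers.ext
    change (n * α) ^ 3 = algebraMap F E ((n : F) ^ 3 * a)
    simp [ha, mul_pow])
  have hxF : (x : F) ^ 3 = n ^ 3 * a := congrArg (algebraMap (𝓞 F) F) hx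
  have hnF : (n : F) ≠ 0 := by exact_mod_cast hn
  refine pow_ne_of_irreducible_X_pow_sub_C hirr dvd_rfl (by norm_num) ((x : F) / n) ?_
  rw [div_pow, hxF]
  field_simp
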